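/- Let ι and κ be finite types, R⁺ : Matrix (ι × ι) (ι × ι) ℂ, S : Matrix (ι × κ) (ι × κ) ℂ, and let F be the flip matrix on index type ι × ι. Consider placements on the triple index type ι × ι × κ: R⁺₁₂ and F₁₂ act on positions (1,2), and S₁₃, S₂₃ act on positions (1,3) and (2,3). If the left mixed Yang–Baxter equation R⁺₁₂ * S₁₃ * S₂₃ = S₂₃ * S₁₃ * R⁺₁₂ holds, then (F*R⁺)₁₂ commutes with S₁₃ * S₂₃, i.e., (F*R⁺)₁₂ * (S₁₃ * S₂₃) = (S₁₃ * S₂₃) * (F*R⁺)₁₂. -/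

import Mathlib

/-!
Conjugating by `F₁₂` exchanges the tensor legs 1 and 2, so `F₁₂ S₁₃ = S₂₃ F₁₂` and
`F₁₂ S₂₃ = S₁₃ F₁₂` (`flip_mul_pl13`, `flip_mul_pl23`). Since `A ↦ A₁₂` is multiplicative
(`pl12_mul`), the mixed Yang-Baxter equation gives
`F₁₂ R₁₂ S₁₃ S₂₃ = F₁₂ S₂₃ S₁₃ R₁₂ = S₁₃ F₁₂ S₁₃ R₁₂ = S₁₃ S₂₃ F₁₂ R₁₂`.
-/

open Matrix

noncomputable section

/-- The flip matrix on index type `ι × ι`. -/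
def flipM (ι : Type*) [DecidableEq ι] : Matrix (ι × ι) (ι × ι) ℂ :=
  fun p q => if p.1 = q.2 ∧ p.2 = q.1 then 1 else 0

/-- Placement of `A : Matrix (ι × ι) (ι × ι) ℂ` on positions (1,2) of `ι × ι × κ`. -/
def pl12 {ι κ : Type*} [DecidableEq κ] (A : Matrix (ι × ι) (ι × ι) ℂ) :
    Matrix (ι × ι × κ) (ι × ι × κ) ℂ :=
  fun x y => if x.2.2 = y.2.2 then A (x.1, x.2.1) (y.1, y.2.1) else 0

/-- Placement of `B : Matrix (ι × κ) (ι × κ) ℂ` on positions (1,3) of `ι × ι × κ`. -/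
def pl13 {ι κ : Type*} [DecidableEq ι] (B : Matrix (ι × κ) (ι × κ) ℂ) :
    Matrix (ι × ι × κ) (ι × ι × κ) ℂ :=
  fun x y => if x.2.1 = y.2.1 then B (x.1, x.2.2) (y.1, y.2.2) else 0

/-- Placement of `B : Matrix (ι × κ) (ι × κ) ℂ` on positions (2,3) of `ι × ι × κ`. -/
def pl23 {ι κ : Type*} [DecidableEq ι] (B : Matrix (ι × κ) (ι × κ) ℂ) :
    Matrix (ι × ι × κ) (ι × ι × κ) ℂ :=
  fun x y => if x.1 = y.1 then B (x.2.1, x.2.2) (y.2.1, y.2.2) else 0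

theorem pl12_mul {ι κ : Type*} [Fintype ι] [Fintype κ] [DecidableEq κ]
    (A B : Matrix (ι × ι) (ι × ι) ℂ) :
    pl12 (κ := κ) (A * B) = pl12 A * pl12 B := by
  ext ⟨a, b, c⟩ ⟨d, e, f⟩
  simp [pl12, Matrix.mul_apply, Fintype.sum_prod_type, ite_mul]

/-- Left multiplication by `F₁₂` permutes rows by exchanging the first two indices. -/
theorem flip_mul_apply {ι κ : Type*} [Fintype ι] [DecidableEq ι] [Fintype κ] [DecidableEq κ]
    (M : Matrix (ι × ι × κ) (ι × ι × κ) ℂ) (a b : ι) (c : κ) (y : ι × ι × κ) :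
    (pl12 (κ := κ) (flipM ι) * M) (a, b, c) y = M (b, a, c) y := by
  rw [Matrix.mul_apply, Finset.sum_eq_single (b, a, c)]
  · simp [pl12, flipM]
  · rintro ⟨d, e, f⟩ _ h
    simp only [pl12, flipM]
    split_ifs <;> simp_all
  · simp

/-- Right multiplication by `F₁₂` permutes columns by exchanging the first two indices. -/
theorem mul_flip_apply {ι κ : Type*} [Fintype ι] [DecidableEq ι] [Fintype κ] [DecidableEq κ]
    (M : Matrix (ι × ι × κ) (ι × ι × κ) ℂ) (x : ι × ι × κ) (a b : ι) (c : κ) :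
    (M * pl12 (κ := κ) (flipM ι)) x (a, b, c) = M x (b, a, c) := by
  rw [Matrix.mul_apply, Finset.sum_eq_single (b, a, c)]
  · simp [pl12, flipM]
  · rintro ⟨d, e, f⟩ _ h
    simp only [pl12, flipM]
    split_ifs <;> simp_all
  · simp

theorem flip_mul_pl13 {ι κ : Type*} [Fintype ι] [DecidableEq ι] [Fintype κ] [DecidableEq κ]
    (S : Matrix (ι × κ) (ι × κ) ℂ) :
    pl12 (flipM ι) * pl13 S = pl23 S * pl12 (flipM ι) := by
  ext ⟨a, b, c⟩ ⟨d, e, f⟩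
  rw [flip_mul_apply, mul_flip_apply]
  rfl

theorem flip_mul_pl23 {ι κ : Type*} [Fintype ι] [DecidableEq ι] [Fintype κ] [DecidableEq κ]
    (S : Matrix (ι × κ) (ι × κ) ℂ) :
    pl12 (flipM ι) * pl23 S = pl13 S * pl12 (flipM ι) := by
  ext ⟨a, b, c⟩ ⟨d, e, f⟩
  rw [flip_mul_apply, mul_flip_apply]
  rfl

theorem stmt13 (ι κ : Type*) [Fintype ι] [DecidableEq ι] [Fintype κ] [DecidableEq κ]
    (Rp : Matrix (ι × ι) (ι × ι) ℂ) (S : Matrix (ι × κ) (ι × κ) ℂ)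
    (hYBE : pl12 (ι := ι) (κ := κ) Rp * pl13 S * pl23 S =
      pl23 S * pl13 S * pl12 (ι := ι) (κ := κ) Rp) :
    pl12 (ι := ι) (κ := κ) (flipM ι * Rp) * (pl13 S * pl23 S) =
      (pl13 S * pl23 S) * pl12 (ι := ι) (κ := κ) (flipM ι * Rp) := by
  rw [pl12_mul, Matrix.mul_assoc, ← Matrix.mul_assoc (pl12 Rp), hYBE]
  simp only [← Matrix.mul_assoc]
  rw [flip_mul_pl23, Matrix.mul_assoc (pl13 S), flip_mul_pl13]
  simp only [Matrix.mul_assoc]
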